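/- Every 3-dimensional superbialgebra over K with dim A₀ = 2 (and hence dim A₁ = 1) is isomorphic as a superbialgebra to exactly one of the following eleven pairwise non-isomorphic superbialgebras, each having Δ(1) = 1 ⊗ 1, ε(1) = 1, ε(y) = 0, with x even and y odd. On the superalgebra A_{2|1} = K[x,y]/(x² − x, y² − x, xy − y): (1) Δ(x) = 1 ⊗ x + x ⊗ 1 − x ⊗ x, Δ(y) = y ⊗ 1 + 1 ⊗ y − y ⊗ x, ε(x) = 0; (2) the co-opposite of (1). On A_{2|2} = K⟨x,y⟩/(x² − x, y², xy − y, yx): (3) Δ(x) = 1 ⊗ x + x ⊗ 1 − x ⊗ x, Δ(y) = 1 ⊗ y + y ⊗ 1 − y ⊗ x − x ⊗ y, ε(x) = 0; (4) Δ(x) = 1 ⊗ x + x ⊗ 1 − x ⊗ x + y ⊗ y, Δ(y) = 1 ⊗ y + y ⊗ 1 − y ⊗ x − x ⊗ y, ε(x) = 0; (5) Δ(x) = x ⊗ x, Δ(y) = y ⊗ x + x ⊗ y, ε(x) = 1; (6) Δ(x) = x ⊗ x + y ⊗ y, Δ(y) = y ⊗ x + x ⊗ y, ε(x) = 1. On A_{2|3}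 = K[x,y]/(x² − x, y², xy − y): (7) Δ(x) = 1 ⊗ x + x ⊗ 1 − x ⊗ x, Δ(y) = 1 ⊗ y + y ⊗ 1 − x ⊗ y − y ⊗ x, ε(x) = 0; (8) Δ(x) = 1 ⊗ x + x ⊗ 1 − x ⊗ x, Δ(y) = 1 ⊗ y + y ⊗ 1 − x ⊗ y, ε(x) = 0; (9) the co-opposite of (8); (10) Δ(x) = 1 ⊗ x + x ⊗ 1 − x ⊗ x, Δ(y) = y ⊗ 1 + 1 ⊗ y, ε(x) = 0; (11) Δ(x) = x ⊗ x, Δ(y) = y ⊗ x + x ⊗ y, ε(x) = 1. -/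

import Mathlib

open TensorProduct

section SuperDefs

variable (K A : Type*) [Field K] [Ring A] [Algebra K A]

/-- A superalgebra structure on the unital associative `K`-algebra `A`: a `ℤ/2ℤ`-grading
`A = A₀ ⊕ A₁` of `K`-vector spaces with `1 ∈ A₀` and `Aᵢ · Aⱼ ⊆ A_{i+j mod 2}`. -/
structure SuperAlgebra where
  A₀ : Submodule K A
  A₁ : Submodule K A
  compl : IsCompl A₀ A₁
  one_mem : (1 : A) ∈ A₀
  mul_mem₀₀ : ∀ a ∈ A₀, ∀ b ∈ A₀, a * b ∈ A₀
  mul_mem₀₁ : ∀ a ∈ A₀, ∀ b ∈ A₁, a * b ∈ A₁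
  mul_mem₁₀ : ∀ a ∈ A₁, ∀ b ∈ A₀, a * b ∈ A₁
  mul_mem₁₁ : ∀ a ∈ A₁, ∀ b ∈ A₁, a * b ∈ A₀

namespace SuperAlgebra

variable {K A}

/-- The projection onto the even part along the odd part. -/
noncomputable def p₀ (S : SuperAlgebra K A) : A →ₗ[K] A :=
  S.A₀.subtype ∘ₗ Submodule.linearProjOfIsCompl S.A₀ S.A₁ S.compl

/-- The projection onto the odd part along the even part. -/
noncomputable def p₁ (S : SuperAlgebra K A) : A →ₗ[K] A :=
  S.A₁.subtype ∘ₗ Submodule.linearProjOfIsCompl S.A₁ S.A₀ S.compl.symm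

/-- The superflip `τ : A ⊗ A → A ⊗ A`, `a ⊗ b ↦ (-1)^{|a||b|} b ⊗ a` on homogeneous
elements. -/
noncomputable def τ (S : SuperAlgebra K A) : A ⊗[K] A →ₗ[K] A ⊗[K] A :=
  (TensorProduct.comm K A A).toLinearMap ∘ₗ
    (TensorProduct.map S.p₀ S.p₀ + TensorProduct.map S.p₀ S.p₁ +
      TensorProduct.map S.p₁ S.p₀ - TensorProduct.map S.p₁ S.p₁)

variable (K A) in
/-- Regrouping `(A ⊗ A) ⊗ (A ⊗ A) ≃ A ⊗ ((A ⊗ A) ⊗ A)`. -/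
noncomputable def rearr : ((A ⊗[K] A) ⊗[K] (A ⊗[K] A)) ≃ₗ[K] (A ⊗[K] ((A ⊗[K] A) ⊗[K] A)) :=
  (TensorProduct.assoc K A A (A ⊗[K] A)) ≪≫ₗ
    TensorProduct.congr (LinearEquiv.refl K A) (TensorProduct.assoc K A A A).symm

/-- The map `(μ ⊗ μ) ∘ (id ⊗ τ ⊗ id) : (A ⊗ A) ⊗ (A ⊗ A) → A ⊗ A`, i.e. the super
multiplication of `A ⊗ A`. -/
noncomputable def superBimul (S : SuperAlgebra K A) :
    ((A ⊗[K] A) ⊗[K] (A ⊗[K] A)) →ₗ[K] A ⊗[K] A :=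
  TensorProduct.map (LinearMap.mul' K A) (LinearMap.mul' K A) ∘ₗ
    (rearr K A).symm.toLinearMap ∘ₗ
    TensorProduct.map (LinearMap.id : A →ₗ[K] A)
      (TensorProduct.map S.τ (LinearMap.id : A →ₗ[K] A)) ∘ₗ
    (rearr K A).toLinearMap

/-- The even part of `A ⊗ A` for the total grading. -/
def evenTensor (S : SuperAlgebra K A) : Submodule K (A ⊗[K] A) :=
  LinearMap.range (TensorProduct.map S.A₀.subtype S.A₀.subtype) ⊔
    LinearMap.range (TensorProduct.map S.A₁.subtype S.A₁.subtype)

/-- The odd part of `A ⊗ A` for the total grading. -/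
def oddTensor (S : SuperAlgebra K A) : Submodule K (A ⊗[K] A) :=
  LinearMap.range (TensorProduct.map S.A₀.subtype S.A₁.subtype) ⊔
    LinearMap.range (TensorProduct.map S.A₁.subtype S.A₀.subtype)

end SuperAlgebra

/-- A superbialgebra over `K`: a superalgebra together with grading-preserving linear maps
`Δ : A → A ⊗ A` and `ε : A → K` satisfying coassociativity, counity, and compatibility
with the (super)algebra structure. -/
structure SuperBialgebra extends SuperAlgebra K A where
  Δ : A →ₗ[K] A ⊗[K] A
  ε : A →ₗ[K] K
  Δ_even : ∀ a ∈ A₀, Δ a ∈ toSuperAlgebra.evenTensor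
  Δ_odd : ∀ a ∈ A₁, Δ a ∈ toSuperAlgebra.oddTensor
  ε_odd : ∀ a ∈ A₁, ε a = 0
  coassoc : ∀ a : A,
    TensorProduct.assoc K A A A (TensorProduct.map Δ (LinearMap.id : A →ₗ[K] A) (Δ a)) =
      TensorProduct.map (LinearMap.id : A →ₗ[K] A) Δ (Δ a)
  counit_left : ∀ a : A,
    TensorProduct.lid K A (TensorProduct.map ε (LinearMap.id : A →ₗ[K] A) (Δ a)) = a
  counit_right : ∀ a : A,
    TensorProduct.rid K A (TensorProduct.map (LinearMap.id : A →ₗ[K] A) ε (Δ a)) = a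
  Δ_one : Δ 1 = 1 ⊗ₜ[K] 1
  ε_one : ε 1 = 1
  ε_mul : ∀ a b : A, ε (a * b) = ε a * ε b
  Δ_mul : ∀ a b : A, Δ (a * b) = toSuperAlgebra.superBimul (Δ a ⊗ₜ[K] Δ b)

/-- A Hopf superalgebra: a superbialgebra with a grading-preserving antipode `S`
satisfying `μ ∘ (S ⊗ id) ∘ Δ = μ ∘ (id ⊗ S) ∘ Δ = η ∘ ε`. -/
structure HopfSuperalgebra extends SuperBialgebra K A where
  antipode : A →ₗ[K] A
  antipode_even : ∀ a ∈ A₀, antipode a ∈ A₀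
  antipode_odd : ∀ a ∈ A₁, antipode a ∈ A₁
  antipode_left : ∀ a : A,
    LinearMap.mul' K A (TensorProduct.map antipode (LinearMap.id : A →ₗ[K] A) (Δ a)) =
      algebraMap K A (ε a)
  antipode_right : ∀ a : A,
    LinearMap.mul' K A (TensorProduct.map (LinearMap.id : A →ₗ[K] A) antipode (Δ a)) =
      algebraMap K A (ε a)

end SuperDefs


/-- `A_{2|1}¹` -/
def B21a {K A : Type*} [Field K] [Ring A] [Algebra K A]
    (B : SuperBialgebra K A) : Prop :=
  ∃ x y : A, x ∈ B.A₀ ∧ y ∈ B.A₁ ∧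
    B.A₀ = Submodule.span K {1, x} ∧ B.A₁ = Submodule.span K {y} ∧
    x * x = x ∧ y * y = x ∧ x * y = y ∧ y * x = y ∧
    B.Δ x = 1 ⊗ₜ[K] x + x ⊗ₜ[K] 1 - x ⊗ₜ[K] x ∧
    B.Δ y = y ⊗ₜ[K] 1 + 1 ⊗ₜ[K] y - y ⊗ₜ[K] x ∧
    B.ε x = 0 ∧ B.ε y = 0

/-- `(A_{2|1}¹)ᶜᵒᵖ` -/
def B21b {K A : Type*} [Field K] [Ring A] [Algebra K A]
    (B : SuperBialgebra K A) : Prop :=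
  ∃ x y : A, x ∈ B.A₀ ∧ y ∈ B.A₁ ∧
    B.A₀ = Submodule.span K {1, x} ∧ B.A₁ = Submodule.span K {y} ∧
    x * x = x ∧ y * y = x ∧ x * y = y ∧ y * x = y ∧
    B.Δ x = 1 ⊗ₜ[K] x + x ⊗ₜ[K] 1 - x ⊗ₜ[K] x ∧
    B.Δ y = y ⊗ₜ[K] 1 + 1 ⊗ₜ[K] y - x ⊗ₜ[K] y ∧
    B.ε x = 0 ∧ B.ε y = 0

/-- `A_{2|2}¹` -/
def B22a {K A : Type*} [Field K] [Ring A] [Algebra K A]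
    (B : SuperBialgebra K A) : Prop :=
  ∃ x y : A, x ∈ B.A₀ ∧ y ∈ B.A₁ ∧
    B.A₀ = Submodule.span K {1, x} ∧ B.A₁ = Submodule.span K {y} ∧
    x * x = x ∧ y * y = 0 ∧ x * y = y ∧ y * x = 0 ∧
    B.Δ x = 1 ⊗ₜ[K] x + x ⊗ₜ[K] 1 - x ⊗ₜ[K] x ∧
    B.Δ y = 1 ⊗ₜ[K] y + y ⊗ₜ[K] 1 - y ⊗ₜ[K] x - x ⊗ₜ[K] y ∧
    B.ε x = 0 ∧ B.ε y = 0

/-- `A_{2|2}²` -/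
def B22b {K A : Type*} [Field K] [Ring A] [Algebra K A]
    (B : SuperBialgebra K A) : Prop :=
  ∃ x y : A, x ∈ B.A₀ ∧ y ∈ B.A₁ ∧
    B.A₀ = Submodule.span K {1, x} ∧ B.A₁ = Submodule.span K {y} ∧
    x * x = x ∧ y * y = 0 ∧ x * y = y ∧ y * x = 0 ∧
    B.Δ x = 1 ⊗ₜ[K] x + x ⊗ₜ[K] 1 - x ⊗ₜ[K] x + y ⊗ₜ[K] y ∧
    B.Δ y = 1 ⊗ₜ[K] y + y ⊗ₜ[K] 1 - y ⊗ₜ[K] x - x ⊗ₜ[K] y ∧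
    B.ε x = 0 ∧ B.ε y = 0

/-- `A_{2|2}³` -/
def B22c {K A : Type*} [Field K] [Ring A] [Algebra K A]
    (B : SuperBialgebra K A) : Prop :=
  ∃ x y : A, x ∈ B.A₀ ∧ y ∈ B.A₁ ∧
    B.A₀ = Submodule.span K {1, x} ∧ B.A₁ = Submodule.span K {y} ∧
    x * x = x ∧ y * y = 0 ∧ x * y = y ∧ y * x = 0 ∧
    B.Δ x = x ⊗ₜ[K] x ∧
    B.Δ y = y ⊗ₜ[K] x + x ⊗ₜ[K] y ∧
    B.ε x = 1 ∧ B.ε y = 0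

/-- `A_{2|2}⁴` -/
def B22d {K A : Type*} [Field K] [Ring A] [Algebra K A]
    (B : SuperBialgebra K A) : Prop :=
  ∃ x y : A, x ∈ B.A₀ ∧ y ∈ B.A₁ ∧
    B.A₀ = Submodule.span K {1, x} ∧ B.A₁ = Submodule.span K {y} ∧
    x * x = x ∧ y * y = 0 ∧ x * y = y ∧ y * x = 0 ∧
    B.Δ x = x ⊗ₜ[K] x + y ⊗ₜ[K] y ∧
    B.Δ y = y ⊗ₜ[K] x + x ⊗ₜ[K] y ∧
    B.ε x = 1 ∧ B.ε y = 0

/-- `A_{2|3}¹` -/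
def B23a {K A : Type*} [Field K] [Ring A] [Algebra K A]
    (B : SuperBialgebra K A) : Prop :=
  ∃ x y : A, x ∈ B.A₀ ∧ y ∈ B.A₁ ∧
    B.A₀ = Submodule.span K {1, x} ∧ B.A₁ = Submodule.span K {y} ∧
    x * x = x ∧ y * y = 0 ∧ x * y = y ∧ y * x = y ∧
    B.Δ x = 1 ⊗ₜ[K] x + x ⊗ₜ[K] 1 - x ⊗ₜ[K] x ∧
    B.Δ y = 1 ⊗ₜ[K] y + y ⊗ₜ[K] 1 - x ⊗ₜ[K] y - y ⊗ₜ[K] x ∧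
    B.ε x = 0 ∧ B.ε y = 0

/-- `A_{2|3}²` -/
def B23b {K A : Type*} [Field K] [Ring A] [Algebra K A]
    (B : SuperBialgebra K A) : Prop :=
  ∃ x y : A, x ∈ B.A₀ ∧ y ∈ B.A₁ ∧
    B.A₀ = Submodule.span K {1, x} ∧ B.A₁ = Submodule.span K {y} ∧
    x * x = x ∧ y * y = 0 ∧ x * y = y ∧ y * x = y ∧
    B.Δ x = 1 ⊗ₜ[K] x + x ⊗ₜ[K] 1 - x ⊗ₜ[K] x ∧
    B.Δ y = 1 ⊗ₜ[K] y + y ⊗ₜ[K] 1 - x ⊗ₜ[K] y ∧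
    B.ε x = 0 ∧ B.ε y = 0

/-- `(A_{2|3}²)ᶜᵒᵖ` -/
def B23c {K A : Type*} [Field K] [Ring A] [Algebra K A]
    (B : SuperBialgebra K A) : Prop :=
  ∃ x y : A, x ∈ B.A₀ ∧ y ∈ B.A₁ ∧
    B.A₀ = Submodule.span K {1, x} ∧ B.A₁ = Submodule.span K {y} ∧
    x * x = x ∧ y * y = 0 ∧ x * y = y ∧ y * x = y ∧
    B.Δ x = 1 ⊗ₜ[K] x + x ⊗ₜ[K] 1 - x ⊗ₜ[K] x ∧
    B.Δ y = 1 ⊗ₜ[K] y + y ⊗ₜ[K] 1 - y ⊗ₜ[K] x ∧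
    B.ε x = 0 ∧ B.ε y = 0

/-- `A_{2|3}⁴` -/
def B23d {K A : Type*} [Field K] [Ring A] [Algebra K A]
    (B : SuperBialgebra K A) : Prop :=
  ∃ x y : A, x ∈ B.A₀ ∧ y ∈ B.A₁ ∧
    B.A₀ = Submodule.span K {1, x} ∧ B.A₁ = Submodule.span K {y} ∧
    x * x = x ∧ y * y = 0 ∧ x * y = y ∧ y * x = y ∧
    B.Δ x = 1 ⊗ₜ[K] x + x ⊗ₜ[K] 1 - x ⊗ₜ[K] x ∧
    B.Δ y = y ⊗ₜ[K] 1 + 1 ⊗ₜ[K] y ∧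
    B.ε x = 0 ∧ B.ε y = 0

/-- `A_{2|3}⁵` -/
def B23e {K A : Type*} [Field K] [Ring A] [Algebra K A]
    (B : SuperBialgebra K A) : Prop :=
  ∃ x y : A, x ∈ B.A₀ ∧ y ∈ B.A₁ ∧
    B.A₀ = Submodule.span K {1, x} ∧ B.A₁ = Submodule.span K {y} ∧
    x * x = x ∧ y * y = 0 ∧ x * y = y ∧ y * x = y ∧
    B.Δ x = x ⊗ₜ[K] x ∧
    B.Δ y = y ⊗ₜ[K] x + x ⊗ₜ[K] y ∧
    B.ε x = 1 ∧ B.ε y = 0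

/-! The kernel of `ε` meets the even part in a line, so `A` has a homogeneous basis `1, u, y` with
`ε u = 0`, unique up to rescaling `u` and `y`. The counit axioms leave eight structure constants.
The compatibility of `Δ` with the product forces `u * u ≠ 0`, so that `u` can be rescaled to an
idempotent. The remaining relations then give every other constant one of finitely many values,
except for the scalar `q` in `y * y = q • u` and the coefficient `β` of `y ⊗ y` in `Δ u`. These
satisfy `β * q = 0` and are normalised by rescaling `y`, for which square roots suffice.
Since idempotency fixes the scale of `u`, rescaling `y` is the only freedom left, and it identifies
no two of the eleven normal forms. -/

section Classification

variable {K A : Type*} [Field K] [Ring A] [Algebra K A]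

namespace SuperAlgebra

variable (S : SuperAlgebra K A)

lemma p₀_apply_of_mem_even {a : A} (ha : a ∈ S.A₀) : S.p₀ a = a :=
  Submodule.projection_apply_of_mem_left S.compl ha

lemma p₀_apply_of_mem_odd {a : A} (ha : a ∈ S.A₁) : S.p₀ a = 0 :=
  Submodule.projection_apply_of_mem_right S.compl ha

lemma p₁_apply_of_mem_even {a : A} (ha : a ∈ S.A₀) : S.p₁ a = 0 :=
  Submodule.projection_apply_of_mem_right S.compl.symm ha

lemma p₁_apply_of_mem_odd {a : A} (ha : a ∈ S.A₁) : S.p₁ a = a :=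
  Submodule.projection_apply_of_mem_left S.compl.symm ha

lemma p₀_add_p₁ (a : A) : S.p₀ a + S.p₁ a = a :=
  Submodule.projection_add_projection_eq_self S.compl a

lemma τ_tmul_of_even_left {b : A} (hb : b ∈ S.A₀) (c : A) : S.τ (b ⊗ₜ c) = c ⊗ₜ b := by
  simp [τ, S.p₀_apply_of_mem_even hb, S.p₁_apply_of_mem_even hb, ← add_tmul, S.p₀_add_p₁]

lemma τ_tmul_of_even_right (b : A) {c : A} (hc : c ∈ S.A₀) : S.τ (b ⊗ₜ c) = c ⊗ₜ b := by
  simp [τ, S.p₀_apply_of_mem_even hc, S.p₁_apply_of_mem_even hc, ← tmul_add, S.p₀_add_p₁]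

lemma τ_tmul_of_odd_odd {b c : A} (hb : b ∈ S.A₁) (hc : c ∈ S.A₁) :
    S.τ (b ⊗ₜ c) = -(c ⊗ₜ b) := by
  simp [τ, S.p₀_apply_of_mem_odd hb, S.p₀_apply_of_mem_odd hc, S.p₁_apply_of_mem_odd hb,
    S.p₁_apply_of_mem_odd hc]

lemma superBimul_of_even_left (a : A) {b : A} (hb : b ∈ S.A₀) (c d : A) :
    S.superBimul ((a ⊗ₜ b) ⊗ₜ (c ⊗ₜ d)) = (a * c) ⊗ₜ (b * d) := by
  simp [superBimul, rearr, S.τ_tmul_of_even_left hb]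

lemma superBimul_of_even_right (a b : A) {c : A} (hc : c ∈ S.A₀) (d : A) :
    S.superBimul ((a ⊗ₜ b) ⊗ₜ (c ⊗ₜ d)) = (a * c) ⊗ₜ (b * d) := by
  simp [superBimul, rearr, S.τ_tmul_of_even_right b hc]

lemma superBimul_of_odd_odd (a : A) {b c : A} (hb : b ∈ S.A₁) (hc : c ∈ S.A₁) (d : A) :
    S.superBimul ((a ⊗ₜ b) ⊗ₜ (c ⊗ₜ d)) = -((a * c) ⊗ₜ (b * d)) := by
  simp [superBimul, rearr, S.τ_tmul_of_odd_odd hb hc, neg_tmul, tmul_neg]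

variable {S} {x y : A}

lemma evenTensor_eq_span (h₀ : S.A₀ = Submodule.span K {1, x}) (h₁ : S.A₁ = Submodule.span K {y}) :
    S.evenTensor = Submodule.span K {1 ⊗ₜ 1, 1 ⊗ₜ x, x ⊗ₜ 1, x ⊗ₜ x, y ⊗ₜ y} := by
  rw [evenTensor, h₀, h₁, range_mapIncl, range_mapIncl, Submodule.map₂_span_span,
    Submodule.map₂_span_span, ← Submodule.span_union]
  simp only [Set.image2_insert_left, Set.image2_singleton_left, Set.image_insert_eq,
    Set.image_singleton, mk_apply]
  congr 1
  grind

lemma oddTensor_eq_span (h₀ : S.A₀ = Submodule.span K {1, x}) (h₁ : S.A₁ = Submodule.span K {y}) :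
    S.oddTensor = Submodule.span K {1 ⊗ₜ y, y ⊗ₜ 1, x ⊗ₜ y, y ⊗ₜ x} := by
  rw [oddTensor, h₀, h₁, range_mapIncl, range_mapIncl, Submodule.map₂_span_span,
    Submodule.map₂_span_span, ← Submodule.span_union]
  simp only [Set.image2_insert_left, Set.image2_singleton_left, Set.image_insert_eq,
    Set.image_singleton, mk_apply]
  congr 1
  grind

lemma exists_homogeneousBasis (hA : Module.finrank K A = 3)
    (h₀ : S.A₀ = Submodule.span K {1, x}) (h₁ : S.A₁ = Submodule.span K {y}) :
    ∃ e : Module.Basis (Fin 3) K A, e 0 = 1 ∧ e 1 = x ∧ e 2 = y := by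
  have span_eq_top : Submodule.span K (Set.range ![1, x, y]) = ⊤ := by
    rw [← S.compl.sup_eq_top, h₀, h₁, ← Submodule.span_union]
    congr 1
    simp only [Matrix.range_cons, Matrix.range_empty, Set.union_empty, Set.singleton_union,
      Set.insert_union]
  exact ⟨basisOfTopLeSpanOfCardEqFinrank ![1, x, y] span_eq_top.ge (by simp [hA]), by simp⟩

lemma evenTensor_coeff_eq (hA : Module.finrank K A = 3) (h₀ : S.A₀ = Submodule.span K {1, x})
    (h₁ : S.A₁ = Submodule.span K {y}) {r s α β r' s' α' β' : K}
    (h : r • (1 ⊗ₜ[K] x) + s • (x ⊗ₜ[K] 1) + α • (x ⊗ₜ[K] x) + β • (y ⊗ₜ[K] y) =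
      r' • (1 ⊗ₜ[K] x) + s' • (x ⊗ₜ[K] 1) + α' • (x ⊗ₜ[K] x) + β' • (y ⊗ₜ[K] y)) :
    α = α' ∧ β = β' := by
  obtain ⟨e, e_zero, rfl, rfl⟩ := exists_homogeneousBasis hA h₀ h₁
  have coeff (i j : Fin 3) := congrArg (fun z => (e.tensorProduct e).repr z (i, j)) h
  exact ⟨by simpa [← e_zero] using coeff 1 1, by simpa [← e_zero] using coeff 2 2⟩

lemma oddTensor_coeff_eq (hA : Module.finrank K A = 3) (h₀ : S.A₀ = Submodule.span K {1, x})
    (h₁ : S.A₁ = Submodule.span K {y}) {r s γ δ r' s' γ' δ' : K}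
    (h : r • (1 ⊗ₜ[K] y) + s • (y ⊗ₜ[K] 1) + γ • (x ⊗ₜ[K] y) + δ • (y ⊗ₜ[K] x) =
      r' • (1 ⊗ₜ[K] y) + s' • (y ⊗ₜ[K] 1) + γ' • (x ⊗ₜ[K] y) + δ' • (y ⊗ₜ[K] x)) :
    γ = γ' ∧ δ = δ' := by
  obtain ⟨e, e_zero, rfl, rfl⟩ := exists_homogeneousBasis hA h₀ h₁
  have coeff (i j : Fin 3) := congrArg (fun z => (e.tensorProduct e).repr z (i, j)) h
  exact ⟨by simpa [← e_zero] using coeff 1 2, by simpa [← e_zero] using coeff 2 1⟩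

end SuperAlgebra

/-- The structure constants of a superbialgebra with even part spanned by `1, u` and odd part
spanned by `y`, where `ε u = 0`: the products are `u u = n u`, `u y = a y`, `y u = b y`,
`y y = q u`, and the coproducts are `Δ u = 1 ⊗ u + u ⊗ 1 + α u ⊗ u + β y ⊗ y` and
`Δ y = 1 ⊗ y + y ⊗ 1 + γ u ⊗ y + δ y ⊗ u`. -/
@[ext]
structure StructureConstants (K : Type*) where
  (n a b q α β γ δ : K)

/-- The superbialgebra `B` has structure constants `c` with respect to the generators `u, y`. -/
structure HasStructureConstants (B : SuperBialgebra K A) (u y : A)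
    (c : StructureConstants K) : Prop where
  even_eq : B.A₀ = Submodule.span K {1, u}
  odd_eq : B.A₁ = Submodule.span K {y}
  ε_u : B.ε u = 0
  u_mul_u : u * u = c.n • u
  u_mul_y : u * y = c.a • y
  y_mul_u : y * u = c.b • y
  y_mul_y : y * y = c.q • u
  Δ_u : B.Δ u = 1 ⊗ₜ u + u ⊗ₜ 1 + c.α • (u ⊗ₜ u) + c.β • (y ⊗ₜ y)
  Δ_y : B.Δ y = 1 ⊗ₜ y + y ⊗ₜ 1 + c.γ • (u ⊗ₜ y) + c.δ • (y ⊗ₜ u)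

namespace SuperBialgebra

lemma exists_even_generator (B : SuperBialgebra K A) (h₀ : Module.finrank K B.A₀ = 2) :
    ∃ u, B.ε u = 0 ∧ B.A₀ = Submodule.span K {1, u} := by
  have : Module.Finite K B.A₀ := Module.finite_of_finrank_pos (by lia)
  have ker_ne_bot : LinearMap.ker (B.ε.domRestrict B.A₀) ≠ ⊥ :=
    LinearMap.ker_ne_bot_of_finrank_lt (by simp [h₀])
  obtain ⟨⟨u, u_even⟩, ε_u, u_ne⟩ := Submodule.exists_mem_ne_zero_of_ne_bot ker_ne_bot
  replace ε_u : B.ε u = 0 := ε_u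
  replace u_ne : u ≠ 0 := fun h => u_ne (Subtype.ext h)
  have indep : LinearIndependent K ![1, u] := by
    refine LinearIndependent.pair_iff.2 fun s t hst => ?_
    have hs : s = 0 := by simpa [B.ε_one, ε_u] using congrArg B.ε hst
    simpa [hs, u_ne] using hst
  have span_le : Submodule.span K {1, u} ≤ B.A₀ :=
    Submodule.span_le.2 (by simp [Set.insert_subset_iff, B.one_mem, u_even])
  refine ⟨u, ε_u, (Submodule.eq_of_le_of_finrank_eq span_le ?_).symm⟩
  have := finrank_span_eq_card indep
  rw [Matrix.range_cons_cons_empty] at this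
  simp [this, h₀]

variable (B : SuperBialgebra K A) {u y : A}

lemma exists_Δ_even_generator_eq (h₀ : B.A₀ = Submodule.span K {1, u})
    (h₁ : B.A₁ = Submodule.span K {y}) (ε_u : B.ε u = 0) :
    ∃ α β : K, B.Δ u = 1 ⊗ₜ u + u ⊗ₜ 1 + α • (u ⊗ₜ u) + β • (y ⊗ₜ y) := by
  have Δ_u := B.Δ_even u (h₀ ▸ Submodule.mem_span_of_mem (by simp))
  simp only [SuperAlgebra.evenTensor_eq_span h₀ h₁, Submodule.mem_span_insert,
    Submodule.mem_span_singleton] at Δ_u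
  obtain ⟨r, _, ⟨s, _, ⟨t, _, ⟨α, _, ⟨β, rfl⟩, rfl⟩, rfl⟩, rfl⟩, Δ_u⟩ := Δ_u
  have ε_y : B.ε y = 0 := B.ε_odd y (h₁ ▸ Submodule.mem_span_singleton_self y)
  have left : r • 1 + s • u = u := by
    simpa [Δ_u, B.ε_one, ε_u, ε_y] using B.counit_left u
  have right : r • 1 + t • u = u := by
    simpa [Δ_u, B.ε_one, ε_u, ε_y] using B.counit_right u
  obtain rfl : r = 0 := by simpa [B.ε_one, ε_u] using congrArg B.ε left
  rw [zero_smul, zero_add] at left right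
  refine ⟨α, β, ?_⟩
  rw [Δ_u, ← tmul_smul s, left, smul_tmul' t, right]
  module

lemma exists_Δ_odd_generator_eq (h₀ : B.A₀ = Submodule.span K {1, u})
    (h₁ : B.A₁ = Submodule.span K {y}) (ε_u : B.ε u = 0) :
    ∃ γ δ : K, B.Δ y = 1 ⊗ₜ y + y ⊗ₜ 1 + γ • (u ⊗ₜ y) + δ • (y ⊗ₜ u) := by
  have y_odd : y ∈ B.A₁ := h₁ ▸ Submodule.mem_span_singleton_self y
  have Δ_y := B.Δ_odd y y_odd
  simp only [SuperAlgebra.oddTensor_eq_span h₀ h₁, Submodule.mem_span_insert,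
    Submodule.mem_span_singleton] at Δ_y
  obtain ⟨s, _, ⟨t, _, ⟨γ, _, ⟨δ, rfl⟩, rfl⟩, rfl⟩, Δ_y⟩ := Δ_y
  have left : s • y = y := by
    simpa [Δ_y, B.ε_one, ε_u, B.ε_odd y y_odd] using B.counit_left y
  have right : t • y = y := by
    simpa [Δ_y, B.ε_one, ε_u, B.ε_odd y y_odd] using B.counit_right y
  refine ⟨γ, δ, ?_⟩
  rw [Δ_y, ← tmul_smul, left, smul_tmul' t, right]
  module

lemma exists_eq_smul_of_ε_eq_zero (h₀ : B.A₀ = Submodule.span K {1, u}) (ε_u : B.ε u = 0) {z : A}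
    (hz : z ∈ B.A₀) (ε_z : B.ε z = 0) : ∃ t : K, z = t • u := by
  obtain ⟨s, t, rfl⟩ := Submodule.mem_span_pair.1 (h₀ ▸ hz)
  have hs : s = 0 := by simpa [B.ε_one, ε_u] using ε_z
  exact ⟨t, by simp [hs]⟩

lemma exists_hasStructureConstants_of_span (h₀ : B.A₀ = Submodule.span K {1, u})
    (h₁ : B.A₁ = Submodule.span K {y}) (ε_u : B.ε u = 0) :
    ∃ c, HasStructureConstants B u y c := by
  have u_even : u ∈ B.A₀ := h₀ ▸ Submodule.mem_span_of_mem (by simp)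
  have y_odd : y ∈ B.A₁ := h₁ ▸ Submodule.mem_span_singleton_self y
  have odd {z : A} (hz : z ∈ B.A₁) : ∃ t : K, z = t • y :=
    (Submodule.mem_span_singleton.1 (h₁ ▸ hz)).imp fun _ => Eq.symm
  obtain ⟨n, u_mul_u⟩ := B.exists_eq_smul_of_ε_eq_zero h₀ ε_u (B.mul_mem₀₀ u u_even u u_even)
    (by simp [B.ε_mul, ε_u])
  obtain ⟨q, y_mul_y⟩ := B.exists_eq_smul_of_ε_eq_zero h₀ ε_u (B.mul_mem₁₁ y y_odd y y_odd)
    (by simp [B.ε_mul, B.ε_odd y y_odd])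
  obtain ⟨a, u_mul_y⟩ := odd (B.mul_mem₀₁ u u_even y y_odd)
  obtain ⟨b, y_mul_u⟩ := odd (B.mul_mem₁₀ y y_odd u u_even)
  obtain ⟨α, β, Δ_u⟩ := B.exists_Δ_even_generator_eq h₀ h₁ ε_u
  obtain ⟨γ, δ, Δ_y⟩ := B.exists_Δ_odd_generator_eq h₀ h₁ ε_u
  exact ⟨⟨n, a, b, q, α, β, γ, δ⟩, h₀, h₁, ε_u, u_mul_u, u_mul_y, y_mul_u, y_mul_y, Δ_u, Δ_y⟩

lemma exists_hasStructureConstants (hA : Module.finrank K A = 3)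
    (h₀ : Module.finrank K B.A₀ = 2) : ∃ u y c, HasStructureConstants B u y c := by
  have : Module.Finite K A := Module.finite_of_finrank_pos (by lia)
  have h₁ : Module.finrank K B.A₁ = 1 := by
    have := Submodule.finrank_add_eq_of_isCompl B.compl
    lia
  obtain ⟨u, ε_u, A₀_eq⟩ := B.exists_even_generator h₀
  obtain ⟨y, y_odd, y_ne⟩ := Submodule.exists_mem_ne_zero_of_ne_bot (p := B.A₁)
    (Submodule.one_le_finrank_iff.1 h₁.ge)
  have A₁_eq := eq_span_singleton_of_mem_of_finrank_eq_one h₁ y_odd y_ne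
  exact ⟨u, y, B.exists_hasStructureConstants_of_span A₀_eq A₁_eq ε_u⟩

end SuperBialgebra

/-- The relations imposed on the structure constants by associativity, by the multiplicativity of
`Δ` on the products of generators, and by coassociativity at `y`. -/
structure StructureConstants.Relations (c : StructureConstants K) : Prop where
  a_sq : c.a ^ 2 = c.n * c.a
  b_sq : c.b ^ 2 = c.n * c.b
  q_mul_a_eq_q_mul_b : c.q * c.a = c.q * c.b
  q_mul_n : c.q * c.n = c.q * c.a
  Δ_u_mul_u : c.β * (2 * (c.a + c.b) + c.α * (c.a ^ 2 + c.b ^ 2)) = c.β * c.n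
  Δ_u_mul_y_left : (1 + c.γ * c.n) * (1 + c.α * c.a) = c.β * c.q * (1 + c.δ * c.b)
  Δ_u_mul_y_right : (1 + c.δ * c.n) * (1 + c.α * c.a) = -(c.β * c.q * (1 + c.γ * c.b))
  Δ_y_mul_u_left : (1 + c.γ * c.n) * (1 + c.α * c.b) = -(c.β * c.q * (1 + c.δ * c.a))
  Δ_y_mul_u_right : (1 + c.δ * c.n) * (1 + c.α * c.b) = c.β * c.q * (1 + c.γ * c.a)
  Δ_y_mul_y_even :
    2 * c.γ * c.q + 2 * c.δ * c.q + c.n * c.q * (c.γ ^ 2 + c.δ ^ 2) = c.q * c.α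
  Δ_y_mul_y_odd : (c.δ - c.γ) * (c.a - c.b) = c.q * c.β
  coassoc_γ : c.γ * c.α = c.γ ^ 2
  coassoc_δ : c.δ * c.α = c.δ ^ 2

namespace HasStructureConstants

open SuperAlgebra

variable {B : SuperBialgebra K A} {u y : A} {c : StructureConstants K}

lemma u_mem (H : HasStructureConstants B u y c) : u ∈ B.A₀ :=
  H.even_eq ▸ Submodule.mem_span_of_mem (by simp)

lemma y_mem (H : HasStructureConstants B u y c) : y ∈ B.A₁ :=
  H.odd_eq ▸ Submodule.mem_span_singleton_self y

lemma Δ_u_mul_u (H : HasStructureConstants B u y c) :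
    B.Δ (u * u) = c.n • (1 ⊗ₜ u) + c.n • (u ⊗ₜ 1)
      + (2 + 4 * c.α * c.n + c.α ^ 2 * c.n ^ 2 - c.β ^ 2 * c.q ^ 2) • (u ⊗ₜ u)
      + (c.β * (2 * (c.a + c.b) + c.α * (c.a ^ 2 + c.b ^ 2))) • (y ⊗ₜ y) := by
  rw [B.Δ_mul, H.Δ_u]
  simp only [add_tmul, tmul_add, tmul_smul, ← smul_tmul', map_add, map_smul, mul_one, one_mul,
    superBimul_of_even_left, superBimul_of_even_right, superBimul_of_odd_odd, B.one_mem, H.u_mem,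
    H.y_mem, H.u_mul_u, H.u_mul_y, H.y_mul_u, H.y_mul_y]
  module

lemma Δ_u_mul_y (H : HasStructureConstants B u y c) :
    B.Δ (u * y) = c.a • (1 ⊗ₜ y) + c.a • (y ⊗ₜ 1)
      + ((1 + c.γ * c.n) * (1 + c.α * c.a) + c.a * c.γ - c.β * c.q * (1 + c.δ * c.b)) • (u ⊗ₜ y)
      + ((1 + c.δ * c.n) * (1 + c.α * c.a) + c.a * c.δ + c.β * c.q * (1 + c.γ * c.b)) •
        (y ⊗ₜ u) := by
  rw [B.Δ_mul, H.Δ_u, H.Δ_y]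
  simp only [add_tmul, tmul_add, tmul_smul, ← smul_tmul', map_add, map_smul, mul_one, one_mul,
    superBimul_of_even_left, superBimul_of_even_right, superBimul_of_odd_odd, B.one_mem, H.u_mem,
    H.y_mem, H.u_mul_u, H.u_mul_y, H.y_mul_u, H.y_mul_y]
  module

lemma Δ_y_mul_u (H : HasStructureConstants B u y c) :
    B.Δ (y * u) = c.b • (1 ⊗ₜ y) + c.b • (y ⊗ₜ 1)
      + ((1 + c.γ * c.n) * (1 + c.α * c.b) + c.b * c.γ + c.β * c.q * (1 + c.δ * c.a)) • (u ⊗ₜ y)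
      + ((1 + c.δ * c.n) * (1 + c.α * c.b) + c.b * c.δ - c.β * c.q * (1 + c.γ * c.a)) •
        (y ⊗ₜ u) := by
  rw [B.Δ_mul, H.Δ_u, H.Δ_y]
  simp only [add_tmul, tmul_add, tmul_smul, ← smul_tmul', map_add, map_smul, mul_one, one_mul,
    superBimul_of_even_left, superBimul_of_even_right, superBimul_of_odd_odd, B.one_mem, H.u_mem,
    H.y_mem, H.u_mul_u, H.u_mul_y, H.y_mul_u, H.y_mul_y]
  module

lemma Δ_y_mul_y (H : HasStructureConstants B u y c) :
    B.Δ (y * y) = c.q • (1 ⊗ₜ u) + c.q • (u ⊗ₜ 1)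
      + (2 * c.γ * c.q + 2 * c.δ * c.q + c.n * c.q * (c.γ ^ 2 + c.δ ^ 2)) • (u ⊗ₜ u)
      + ((c.δ - c.γ) * (c.a - c.b)) • (y ⊗ₜ y) := by
  rw [B.Δ_mul, H.Δ_y]
  simp only [add_tmul, tmul_add, tmul_smul, ← smul_tmul', map_add, map_smul, mul_one, one_mul,
    superBimul_of_even_left, superBimul_of_even_right, superBimul_of_odd_odd, B.one_mem, H.u_mem,
    H.y_mem, H.u_mul_u, H.u_mul_y, H.y_mul_u, H.y_mul_y]
  module

lemma coassoc_y (hA : Module.finrank K A = 3) (H : HasStructureConstants B u y c) :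
    c.γ * c.α = c.γ ^ 2 ∧ c.δ * c.α = c.δ ^ 2 := by
  obtain ⟨e, e_zero, rfl, rfl⟩ := exists_homogeneousBasis hA H.even_eq H.odd_eq
  have Δ_e_zero : B.Δ (e 0) = e 0 ⊗ₜ e 0 := by rw [e_zero, B.Δ_one]
  have coeff (i j k : Fin 3) := congrArg
    (fun z => (e.tensorProduct (e.tensorProduct e)).repr z (i, j, k)) (B.coassoc (e 2))
  have γ_α : c.γ * c.α = c.γ * c.γ := by
    simpa [H.Δ_u, H.Δ_y, Δ_e_zero, add_tmul, tmul_add, ← smul_tmul', ← e_zero,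
      -mul_eq_mul_left_iff] using coeff 1 1 2
  have δ_α : c.δ * c.δ = c.δ * c.α := by
    simpa [H.Δ_u, H.Δ_y, Δ_e_zero, add_tmul, tmul_add, ← smul_tmul', ← e_zero,
      -mul_eq_mul_left_iff] using coeff 2 1 1
  exact ⟨by linear_combination γ_α, by linear_combination -δ_α⟩

lemma u_ne_zero (hA : Module.finrank K A = 3) (H : HasStructureConstants B u y c) : u ≠ 0 := by
  obtain ⟨e, -, rfl, -⟩ := exists_homogeneousBasis hA H.even_eq H.odd_eq
  exact e.ne_zero 1

lemma y_ne_zero (hA : Module.finrank K A = 3) (H : HasStructureConstants B u y c) : y ≠ 0 := by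
  obtain ⟨e, -, -, rfl⟩ := exists_homogeneousBasis hA H.even_eq H.odd_eq
  exact e.ne_zero 2

lemma smul_u_injective (hA : Module.finrank K A = 3) (H : HasStructureConstants B u y c) :
    Function.Injective fun s : K => s • u :=
  smul_left_injective K (H.u_ne_zero hA)

lemma smul_y_injective (hA : Module.finrank K A = 3) (H : HasStructureConstants B u y c) :
    Function.Injective fun s : K => s • y :=
  smul_left_injective K (H.y_ne_zero hA)

lemma assoc_relations (hA : Module.finrank K A = 3) (H : HasStructureConstants B u y c) :
    c.a ^ 2 = c.n * c.a ∧ c.b ^ 2 = c.n * c.b ∧ c.q * c.a = c.q * c.b ∧ c.q * c.n = c.q * c.a := by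
  have assoc_uuy := mul_assoc u u y
  have assoc_yuu := mul_assoc y u u
  have assoc_yyy := mul_assoc y y y
  have assoc_uyy := mul_assoc u y y
  simp only [H.u_mul_u, H.u_mul_y, H.y_mul_u, H.y_mul_y, smul_mul_assoc, mul_smul_comm,
    smul_smul] at assoc_uuy assoc_yuu assoc_yyy assoc_uyy
  have uuy := H.smul_y_injective hA assoc_uuy
  have yuu := H.smul_y_injective hA assoc_yuu
  have yyy := H.smul_y_injective hA assoc_yyy
  have uyy := H.smul_u_injective hA assoc_uyy
  exact ⟨by linear_combination -uuy, by linear_combination yuu, yyy,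
    by linear_combination -uyy⟩

lemma relations (hA : Module.finrank K A = 3) (H : HasStructureConstants B u y c) :
    c.Relations := by
  have Δ_uu := H.Δ_u_mul_u
  have Δ_uy := H.Δ_u_mul_y
  have Δ_yu := H.Δ_y_mul_u
  have Δ_yy := H.Δ_y_mul_y
  rw [H.u_mul_u, map_smul, H.Δ_u] at Δ_uu
  rw [H.u_mul_y, map_smul, H.Δ_y] at Δ_uy
  rw [H.y_mul_u, map_smul, H.Δ_y] at Δ_yu
  rw [H.y_mul_y, map_smul, H.Δ_u] at Δ_yy
  simp only [smul_add, smul_smul] at Δ_uu Δ_uy Δ_yu Δ_yy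
  obtain ⟨-, uu⟩ := evenTensor_coeff_eq hA H.even_eq H.odd_eq Δ_uu
  obtain ⟨uy₁, uy₂⟩ := oddTensor_coeff_eq hA H.even_eq H.odd_eq Δ_uy
  obtain ⟨yu₁, yu₂⟩ := oddTensor_coeff_eq hA H.even_eq H.odd_eq Δ_yu
  obtain ⟨yy₁, yy₂⟩ := evenTensor_coeff_eq hA H.even_eq H.odd_eq Δ_yy
  obtain ⟨a_sq, b_sq, q_mul_a, q_mul_n⟩ := H.assoc_relations hA
  obtain ⟨coassoc_γ, coassoc_δ⟩ := H.coassoc_y hA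
  exact
    { a_sq := a_sq
      b_sq := b_sq
      q_mul_a_eq_q_mul_b := q_mul_a
      q_mul_n := q_mul_n
      Δ_u_mul_u := by linear_combination -uu
      Δ_u_mul_y_left := by linear_combination -uy₁
      Δ_u_mul_y_right := by linear_combination -uy₂
      Δ_y_mul_u_left := by linear_combination -yu₁
      Δ_y_mul_u_right := by linear_combination -yu₂
      Δ_y_mul_y_even := by linear_combination -yy₁
      Δ_y_mul_y_odd := by linear_combination -yy₂
      coassoc_γ := coassoc_γ
      coassoc_δ := coassoc_δ }

end HasStructureConstants

namespace StructureConstants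

/-- The structure constants after the change of generators `u ↦ s u`, `y ↦ t y`. -/
def rescale (c : StructureConstants K) (s t : K) : StructureConstants K where
  n := s * c.n
  a := s * c.a
  b := s * c.b
  q := t ^ 2 * c.q / s
  α := c.α / s
  β := s * c.β / t ^ 2
  γ := c.γ / s
  δ := c.δ / s

/-- The structure constants of the eleven superbialgebras of the classification, in the order
listed. The generator `u` is `x` if `ε x = 0` and `1 - x` if `ε x = 1` (indices 4, 5 and
10, counted from 0). -/
def normalForm : Fin 11 → StructureConstants K :=
  ![⟨1, 1, 1, 1, -1, 0, 0, -1⟩,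
    ⟨1, 1, 1, 1, -1, 0, -1, 0⟩,
    ⟨1, 1, 0, 0, -1, 0, -1, -1⟩,
    ⟨1, 1, 0, 0, -1, 1, -1, -1⟩,
    ⟨1, 0, 1, 0, -1, 0, -1, -1⟩,
    ⟨1, 0, 1, 0, -1, -1, -1, -1⟩,
    ⟨1, 1, 1, 0, -1, 0, -1, -1⟩,
    ⟨1, 1, 1, 0, -1, 0, -1, 0⟩,
    ⟨1, 1, 1, 0, -1, 0, 0, -1⟩,
    ⟨1, 1, 1, 0, -1, 0, 0, 0⟩,
    ⟨1, 0, 0, 0, -1, 0, -1, -1⟩]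

namespace Relations

variable {c : StructureConstants K}

lemma β_mul_q (R : c.Relations) : c.β * c.q = 0 := by
  have : c.q * (c.β * c.q) = 0 := by
    linear_combination (c.δ - c.γ) * R.q_mul_a_eq_q_mul_b - c.q * R.Δ_y_mul_y_odd
  grind

lemma n_ne_zero (R : c.Relations) : c.n ≠ 0 := by
  intro hn
  have ha : c.a = 0 := by simpa [hn] using R.a_sq
  simpa [hn, ha, R.β_mul_q] using R.Δ_u_mul_y_left

lemma a_eq (R : c.Relations) (hn : c.n = 1) : c.a = 0 ∨ c.a = 1 := by
  have := R.a_sq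
  grind

lemma b_eq (R : c.Relations) (hn : c.n = 1) : c.b = 0 ∨ c.b = 1 := by
  have := R.b_sq
  grind

lemma α_eq (R : c.Relations) (hn : c.n = 1) : c.α = -1 := by
  have one_add_γ_mul : (1 + c.γ) * (1 + c.α * c.a) = 0 := by
    linear_combination R.Δ_u_mul_y_left - c.γ * (1 + c.α * c.a) * hn
      + (1 + c.δ * c.b) * R.β_mul_q
  have coassoc_γ := R.coassoc_γ
  rcases R.a_eq hn with ha | ha <;> rw [ha] at one_add_γ_mul <;> grind

lemma γ_eq (R : c.Relations) (hn : c.n = 1) : c.γ = 0 ∨ c.γ = -1 := by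
  have := R.α_eq hn
  have := R.coassoc_γ
  grind

lemma δ_eq (R : c.Relations) (hn : c.n = 1) : c.δ = 0 ∨ c.δ = -1 := by
  have := R.α_eq hn
  have := R.coassoc_δ
  grind

lemma γ_eq_and_δ_eq (R : c.Relations) (hn : c.n = 1) (hab : c.a = 0 ∨ c.b = 0) :
    c.γ = -1 ∧ c.δ = -1 := by
  have := R.Δ_u_mul_y_left
  have := R.Δ_u_mul_y_right
  have := R.Δ_y_mul_u_left
  have := R.Δ_y_mul_u_right
  have := R.β_mul_q
  grind

lemma eq_of_q_ne_zero (R : c.Relations) (hn : c.n = 1) (hq : c.q ≠ 0) :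
    c = ⟨1, 1, 1, c.q, -1, 0, 0, -1⟩ ∨ c = ⟨1, 1, 1, c.q, -1, 0, -1, 0⟩ := by
  have hα := R.α_eq hn
  have ha : c.a = 1 := by
    rw [← mul_left_cancel₀ hq R.q_mul_n, hn]
  have hb : c.b = 1 := by
    rw [← mul_left_cancel₀ hq R.q_mul_a_eq_q_mul_b, ha]
  have hβ : c.β = 0 := (mul_eq_zero.1 R.β_mul_q).resolve_right hq
  have γ_δ : 2 * c.γ + 2 * c.δ + c.γ ^ 2 + c.δ ^ 2 = -1 := by
    refine mul_left_cancel₀ hq ?_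
    linear_combination R.Δ_y_mul_y_even + c.q * hα - c.q * (c.γ ^ 2 + c.δ ^ 2) * hn
  rcases R.γ_eq hn with hγ | hγ <;> rcases R.δ_eq hn with hδ | hδ <;>
    simp only [StructureConstants.ext_iff, hn, ha, hb, hα, hβ, hγ, hδ] <;> grind

lemma eq_of_β_ne_zero (R : c.Relations) (hn : c.n = 1) (hβ : c.β ≠ 0) :
    c = ⟨1, 1, 0, 0, -1, c.β, -1, -1⟩ ∨ c = ⟨1, 0, 1, 0, -1, c.β, -1, -1⟩ := by
  have hα := R.α_eq hn
  have hq : c.q = 0 := (mul_eq_zero.1 R.β_mul_q).resolve_left hβ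
  have a_add_b : c.a + c.b = 1 := by
    refine mul_left_cancel₀ hβ ?_
    linear_combination R.Δ_u_mul_u - c.β * (c.a ^ 2 + c.b ^ 2) * hα + c.β * (R.a_sq + R.b_sq)
      + c.β * (c.a + c.b + 1) * hn
  obtain ⟨hγ, hδ⟩ := R.γ_eq_and_δ_eq hn (by have := R.a_eq hn; grind)
  rcases R.a_eq hn with ha | ha <;>
    simp only [StructureConstants.ext_iff, hn, ha, hα, hq, hγ, hδ] <;> grind

lemma exists_eq_normalForm (R : c.Relations) (hn : c.n = 1) (hq : c.q = 0) (hβ : c.β = 0) :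
    ∃ i, c = normalForm i := by
  have hα := R.α_eq hn
  by_cases hab : c.a = 1 ∧ c.b = 1
  · obtain ⟨ha, hb⟩ := hab
    rcases R.γ_eq hn with hγ | hγ <;> rcases R.δ_eq hn with hδ | hδ
    · exact ⟨9, StructureConstants.ext hn ha hb hq hα hβ hγ hδ⟩
    · exact ⟨8, StructureConstants.ext hn ha hb hq hα hβ hγ hδ⟩
    · exact ⟨7, StructureConstants.ext hn ha hb hq hα hβ hγ hδ⟩
    · exact ⟨6, StructureConstants.ext hn ha hb hq hα hβ hγ hδ⟩
  · have a_eq := R.a_eq hn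
    have b_eq := R.b_eq hn
    obtain ⟨hγ, hδ⟩ := R.γ_eq_and_δ_eq hn (by grind)
    rcases a_eq with ha | ha <;> rcases b_eq with hb | hb
    · exact ⟨10, StructureConstants.ext hn ha hb hq hα hβ hγ hδ⟩
    · exact ⟨4, StructureConstants.ext hn ha hb hq hα hβ hγ hδ⟩
    · exact ⟨2, StructureConstants.ext hn ha hb hq hα hβ hγ hδ⟩
    · exact absurd ⟨ha, hb⟩ hab

lemma exists_rescale_eq_normalForm (hsq : ∀ z : K, IsSquare z) (R : c.Relations) (hn : c.n = 1) :
    ∃ i, ∃ t : K, t ≠ 0 ∧ c.rescale 1 t = normalForm i := by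
  by_cases hq : c.q = 0
  · by_cases hβ : c.β = 0
    · obtain ⟨i, rfl⟩ := R.exists_eq_normalForm hn hq hβ
      exact ⟨i, 1, one_ne_zero, by simp [rescale]⟩
    · rcases R.eq_of_β_ne_zero hn hβ with h | h
      · obtain ⟨t, ht⟩ := hsq c.β
        have t_ne : t ≠ 0 := by rintro rfl; simp [hβ] at ht
        refine ⟨3, t, t_ne, ?_⟩
        rw [h]
        simp [rescale, normalForm, ht, ← sq, t_ne]
      · obtain ⟨t, ht⟩ := hsq (-c.β)
        have t_ne : t ≠ 0 := by rintro rfl; simp [hβ] at ht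
        refine ⟨5, t, t_ne, ?_⟩
        rw [h]
        simp [rescale, normalForm, neg_eq_iff_eq_neg.1 ht, ← sq, t_ne]
  · obtain ⟨t, ht⟩ := hsq c.q⁻¹
    have t_ne : t ≠ 0 := by rintro rfl; simp [hq] at ht
    have t_sq : t ^ 2 * c.q = 1 := by rw [sq, ← ht, inv_mul_cancel₀ hq]
    rcases R.eq_of_q_ne_zero hn hq with h | h
    · refine ⟨0, t, t_ne, ?_⟩
      rw [h]
      simp [rescale, normalForm, t_sq]
    · refine ⟨1, t, t_ne, ?_⟩
      rw [h]
      simp [rescale, normalForm, t_sq]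

end Relations

lemma eq_of_rescale_normalForm_eq {i j : Fin 11} {s t : K} (ht : t ≠ 0)
    (h : (normalForm i).rescale s t = normalForm j) : i = j := by
  have n_eq_one (k : Fin 11) : (normalForm k : StructureConstants K).n = 1 := by
    fin_cases k <;> rfl
  obtain rfl : s = 1 := by simpa [rescale, n_eq_one] using congrArg n h
  revert h
  fin_cases i <;> fin_cases j <;> simp [normalForm, rescale, ht]

end StructureConstants

namespace HasStructureConstants

open SuperAlgebra

variable {B : SuperBialgebra K A} {u y u' y' : A} {c c' : StructureConstants K}

lemma rescale (H : HasStructureConstants B u y c) {s t : K} (hs : s ≠ 0) (ht : t ≠ 0) :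
    HasStructureConstants B (s • u) (t • y) (c.rescale s t) where
  even_eq := by
    rw [H.even_eq, Submodule.span_insert, Submodule.span_insert,
      Submodule.span_singleton_smul_eq hs.isUnit]
  odd_eq := by rw [H.odd_eq, Submodule.span_singleton_smul_eq ht.isUnit]
  ε_u := by simp [H.ε_u]
  u_mul_u := by
    simp only [StructureConstants.rescale, smul_mul_smul_comm, H.u_mul_u]
    module
  u_mul_y := by
    simp only [StructureConstants.rescale, smul_mul_smul_comm, H.u_mul_y]
    module
  y_mul_u := by
    simp only [StructureConstants.rescale, smul_mul_smul_comm, H.y_mul_u]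
    module
  y_mul_y := by
    simp only [StructureConstants.rescale, smul_mul_smul_comm, H.y_mul_y]
    match_scalars
    field
  Δ_u := by
    simp only [StructureConstants.rescale, map_smul, H.Δ_u, tmul_smul, ← smul_tmul']
    match_scalars <;> field
  Δ_y := by
    simp only [StructureConstants.rescale, map_smul, H.Δ_y, tmul_smul, ← smul_tmul']
    match_scalars <;> field

lemma unique (hA : Module.finrank K A = 3) (H : HasStructureConstants B u y c)
    (H' : HasStructureConstants B u y c') : c = c' := by
  obtain ⟨hα, hβ⟩ := evenTensor_coeff_eq hA H.even_eq H.odd_eq (r := 1) (s := 1) (r' := 1)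
    (s' := 1) (by simpa only [one_smul] using H.Δ_u.symm.trans H'.Δ_u)
  obtain ⟨hγ, hδ⟩ := oddTensor_coeff_eq hA H.even_eq H.odd_eq (r := 1) (s := 1) (r' := 1)
    (s' := 1) (by simpa only [one_smul] using H.Δ_y.symm.trans H'.Δ_y)
  have hn := H.smul_u_injective hA (H.u_mul_u.symm.trans H'.u_mul_u)
  have ha := H.smul_y_injective hA (H.u_mul_y.symm.trans H'.u_mul_y)
  have hb := H.smul_y_injective hA (H.y_mul_u.symm.trans H'.y_mul_u)
  have hq := H.smul_u_injective hA (H.y_mul_y.symm.trans H'.y_mul_y)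
  exact StructureConstants.ext hn ha hb hq hα hβ hγ hδ

lemma exists_rescale_eq (hA : Module.finrank K A = 3) (H : HasStructureConstants B u y c)
    (H' : HasStructureConstants B u' y' c') :
    ∃ s t : K, t ≠ 0 ∧ c.rescale s t = c' := by
  obtain ⟨s, rfl⟩ := B.exists_eq_smul_of_ε_eq_zero H.even_eq H.ε_u H'.u_mem H'.ε_u
  obtain ⟨t, rfl⟩ := Submodule.mem_span_singleton.1 (H.odd_eq ▸ H'.y_mem)
  have hs : s ≠ 0 := fun hs => H'.u_ne_zero hA (by rw [hs, zero_smul])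
  have ht : t ≠ 0 := fun ht => H'.y_ne_zero hA (by rw [ht, zero_smul])
  exact ⟨s, t, ht, (H.rescale hs ht).unique hA H'⟩

end HasStructureConstants

lemma hasStructureConstants_iff {B : SuperBialgebra K A} {x y : A} {c : StructureConstants K} :
    HasStructureConstants B x y c ↔
      x ∈ B.A₀ ∧ y ∈ B.A₁ ∧ B.A₀ = Submodule.span K {1, x} ∧ B.A₁ = Submodule.span K {y} ∧
      x * x = c.n • x ∧ y * y = c.q • x ∧ x * y = c.a • y ∧ y * x = c.b • y ∧
      B.Δ x = 1 ⊗ₜ x + x ⊗ₜ 1 + c.α • (x ⊗ₜ x) + c.β • (y ⊗ₜ y) ∧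
      B.Δ y = 1 ⊗ₜ y + y ⊗ₜ 1 + c.γ • (x ⊗ₜ y) + c.δ • (y ⊗ₜ x) ∧ B.ε x = 0 ∧ B.ε y = 0 :=
  ⟨fun H => ⟨H.u_mem, H.y_mem, H.even_eq, H.odd_eq, H.u_mul_u, H.y_mul_y, H.u_mul_y, H.y_mul_u,
    H.Δ_u, H.Δ_y, H.ε_u, B.ε_odd y H.y_mem⟩,
   fun ⟨_, _, h₀, h₁, xx, yy, xy, yx, Δ_x, Δ_y, ε_x, _⟩ =>
    ⟨h₀, h₁, ε_x, xx, xy, yx, yy, Δ_x, Δ_y⟩⟩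

lemma span_one_one_sub (x : A) : Submodule.span K {1, 1 - x} = Submodule.span K {1, x} := by
  have le (z : A) : Submodule.span K {1, 1 - z} ≤ Submodule.span K {1, z} := by
    have one_mem : (1 : A) ∈ Submodule.span K {1, z} := Submodule.mem_span_of_mem (by simp)
    have z_mem : z ∈ Submodule.span K {1, z} := Submodule.mem_span_of_mem (by simp)
    exact Submodule.span_le.2 (Set.pair_subset one_mem (sub_mem one_mem z_mem))
  exact le_antisymm (le x) (by simpa only [sub_sub_cancel] using le (1 - x))

lemma hasStructureConstants_one_sub_iff {B : SuperBialgebra K A} {x y : A} {a b β : K} :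
    HasStructureConstants B (1 - x) y ⟨1, a, b, 0, -1, β, -1, -1⟩ ↔
      x ∈ B.A₀ ∧ y ∈ B.A₁ ∧ B.A₀ = Submodule.span K {1, x} ∧ B.A₁ = Submodule.span K {y} ∧
      x * x = x ∧ y * y = 0 ∧ x * y = (1 - a) • y ∧ y * x = (1 - b) • y ∧
      B.Δ x = x ⊗ₜ x - β • (y ⊗ₜ y) ∧ B.Δ y = y ⊗ₜ x + x ⊗ₜ y ∧ B.ε x = 1 ∧ B.ε y = 0 := by
  have mem_iff : 1 - x ∈ B.A₀ ↔ x ∈ B.A₀ := B.A₀.sub_mem_iff_right B.one_mem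
  have mul_self_iff : (1 - x) * (1 - x) = 1 - x ↔ x * x = x := IsIdempotentElem.one_sub_iff
  have mul_y_iff : (1 - x) * y = a • y ↔ x * y = (1 - a) • y := by
    rw [sub_mul, one_mul, sub_smul, one_smul]
    grind
  have y_mul_iff : y * (1 - x) = b • y ↔ y * x = (1 - b) • y := by
    rw [mul_sub, mul_one, sub_smul, one_smul]
    grind
  have Δ_x_iff : B.Δ (1 - x) = 1 ⊗ₜ (1 - x) + (1 - x) ⊗ₜ 1 + (-1 : K) • ((1 - x) ⊗ₜ (1 - x))
      + β • (y ⊗ₜ y) ↔ B.Δ x = x ⊗ₜ x - β • (y ⊗ₜ y) := by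
    simp only [map_sub, B.Δ_one, sub_tmul, tmul_sub, neg_smul, one_smul]
    grind
  have Δ_y_iff : B.Δ y = 1 ⊗ₜ y + y ⊗ₜ 1 + (-1 : K) • ((1 - x) ⊗ₜ y) + (-1 : K) • (y ⊗ₜ (1 - x))
      ↔ B.Δ y = y ⊗ₜ x + x ⊗ₜ y := by
    simp only [sub_tmul, tmul_sub, neg_smul, one_smul]
    grind
  have ε_iff : B.ε (1 - x) = 0 ↔ B.ε x = 1 := by
    rw [map_sub, B.ε_one, sub_eq_zero, eq_comm]
  rw [hasStructureConstants_iff, mem_iff, span_one_one_sub, mul_y_iff, y_mul_iff, Δ_x_iff,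
    Δ_y_iff, ε_iff, one_smul, zero_smul, mul_self_iff]

lemma family_iff_exists_hasStructureConstants (B : SuperBialgebra K A) (i : Fin 11) :
    ![B21a B, B21b B, B22a B, B22b B, B22c B, B22d B,
      B23a B, B23b B, B23c B, B23d B, B23e B] i ↔
      ∃ u y, HasStructureConstants B u y (StructureConstants.normalForm i) := by
  match i with
  | 4 | 5 | 10 =>
    rw [(Equiv.subLeft (1 : A)).surjective.exists]
    refine exists₂_congr fun x y => ?_
    simp [StructureConstants.normalForm, hasStructureConstants_one_sub_iff]
  | 0 | 1 | 2 | 3 | 6 | 7 | 8 | 9 =>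
    refine exists₂_congr fun x y => ?_
    simp [StructureConstants.normalForm, hasStructureConstants_iff, sub_eq_add_neg, add_comm,
      add_left_comm]

end Classification

theorem three_dim_superbialgebra_classification_general
    {K A : Type*} [Field K] [Ring A] [Algebra K A] (hsq : ∀ z : K, IsSquare z)
    (B : SuperBialgebra K A) (hA : Module.finrank K A = 3)
    (h0 : Module.finrank K B.A₀ = 2) :
    ∃! i : Fin 11,
      ![B21a B, B21b B, B22a B, B22b B, B22c B, B22d B,
        B23a B, B23b B, B23c B, B23d B, B23e B] i := by
  simp only [family_iff_exists_hasStructureConstants]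
  obtain ⟨u, y, c, H⟩ := B.exists_hasStructureConstants hA h0
  have n_ne_zero := (H.relations hA).n_ne_zero
  have H₁ := H.rescale (inv_ne_zero n_ne_zero) one_ne_zero
  obtain ⟨i, t, ht, h_i⟩ :=
    (H₁.relations hA).exists_rescale_eq_normalForm hsq (inv_mul_cancel₀ n_ne_zero)
  have H_i := h_i ▸ H₁.rescale one_ne_zero ht
  refine ⟨i, ⟨_, _, H_i⟩, ?_⟩
  rintro j ⟨v, z, H_j⟩
  obtain ⟨s, t, ht, h⟩ := H_j.exists_rescale_eq hA H_i
  exact StructureConstants.eq_of_rescale_normalForm_eq ht h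

/-- every 3-dimensional superbialgebra with `dim A₀ = 2` is isomorphic to
exactly one of the eleven pairwise non-isomorphic superbialgebras listed. -/
theorem three_dim_superbialgebra_classification
    {K A : Type*} [Field K] [IsAlgClosed K] [CharZero K] [Ring A] [Algebra K A]
    (B : SuperBialgebra K A)
    (hA : Module.finrank K A = 3)
    (h0 : Module.finrank K B.A₀ = 2) :
    ∃! i : Fin 11,
      ![B21a B, B21b B, B22a B, B22b B, B22c B, B22d B,
        B23a B, B23b B, B23c B, B23d B, B23e B] i := by
  exact three_dim_superbialgebra_classification_general (fun z => IsAlgClosed.exists_eq_mul_self z)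
    B hA h0
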